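/- For the matrix Linear/Gaussian/Bernoulli covariance process started at P(0) ≥ P∞, where P∞ is a positive definite fixed point of g: for every arrival sequence s ∈ {0,1}^ℕ and every k one has P(k) ≥ P∞ and hence P(k)⁻¹ ≤ P∞⁻¹; consequently, for every arrival probability γ̄ ∈ (0,1] and every k, the expected information matrix satisfies E[P(k)⁻¹] ≤ P∞⁻¹ in the Löwner order (in particular the expectation exists). -/

import Mathlib

open Matrix MeasureTheory ProbabilityTheory

/-- Time-update Riccati map `h(P) = A P Aᵀ + Q`. -/
def riccatiH {n : ℕ} (A Q P : Matrix (Fin n) (Fin n) ℝ) :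
    Matrix (Fin n) (Fin n) ℝ := A * P * Aᵀ + Q

/-- Measurement-update Riccati map `g(P) = ((A P Aᵀ + Q)⁻¹ + 𝓘)⁻¹`. -/
noncomputable def riccatiG {n : ℕ} (A Q I P : Matrix (Fin n) (Fin n) ℝ) :
    Matrix (Fin n) (Fin n) ℝ := ((A * P * Aᵀ + Q)⁻¹ + I)⁻¹

/-- The matrix Linear/Gaussian/Bernoulli covariance process driven by the
arrival sequence `s : ℕ → Bool`, started at `P₀`. -/
noncomputable def lgbMatProc {n : ℕ} (A Q I P₀ : Matrix (Fin n) (Fin n) ℝ)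
    (s : ℕ → Bool) : ℕ → Matrix (Fin n) (Fin n) ℝ
  | 0 => P₀
  | k + 1 =>
      if s k then riccatiG A Q I (lgbMatProc A Q I P₀ s k)
      else riccatiH A Q (lgbMatProc A Q I P₀ s k)

lemma lgb_inv_anti {n : ℕ} {X Y : Matrix (Fin n) (Fin n) ℝ} (hX : X.PosDef) (hY : Y.PosDef)
    (h : (Y - X).PosSemidef) : (X⁻¹ - Y⁻¹).PosSemidef := by
  have hXu : IsUnit X.det := (Matrix.isUnit_iff_isUnit_det _).1 hX.isUnit
  have hYu : IsUnit Y.det := (Matrix.isUnit_iff_isUnit_det _).1 hY.isUnit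
  have h1 := h.conjTranspose_mul_mul_same Y⁻¹
  have h2 := hX.inv.posSemidef.conjTranspose_mul_mul_same ((Y - X) * Y⁻¹)
  have e : X⁻¹ - Y⁻¹ = (Y⁻¹)ᴴ * (Y - X) * Y⁻¹
      + ((Y - X) * Y⁻¹)ᴴ * X⁻¹ * ((Y - X) * Y⁻¹) := by
    rw [Matrix.conjTranspose_mul, hY.inv.isHermitian.eq, h.isHermitian.eq]
    have a1 : (Y - X) * Y⁻¹ = 1 - X * Y⁻¹ := by
      rw [sub_mul, Matrix.mul_nonsing_inv _ hYu]
    have a2 : Y⁻¹ * (Y - X) = 1 - Y⁻¹ * X := by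
      rw [mul_sub, Matrix.nonsing_inv_mul _ hYu]
    have a3 : (1 - Y⁻¹ * X) * X⁻¹ = X⁻¹ - Y⁻¹ := by
      rw [sub_mul, one_mul, mul_assoc, Matrix.mul_nonsing_inv _ hXu, mul_one]
    have a4 : X⁻¹ * (X * Y⁻¹) = Y⁻¹ := by
      rw [← mul_assoc, Matrix.nonsing_inv_mul _ hXu, one_mul]
    rw [a1, a2, a3, sub_mul, sub_mul, mul_sub, mul_sub, a4, mul_one, mul_one, one_mul, mul_assoc]
    abel
  rw [e]
  exact h1.add h2

lemma lgb_h_posDef {n : ℕ} {A Q P : Matrix (Fin n) (Fin n) ℝ} (hA : IsUnit A.det)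
    (hQ : Q.PosSemidef) (hP : P.PosDef) : (A * P * Aᵀ + Q).PosDef := by
  have hu : IsUnit A := (Matrix.isUnit_iff_isUnit_det _).2 hA
  have := hP.mul_mul_conjTranspose_same (B := A) (Matrix.vecMul_injective_of_isUnit hu)
  rw [Matrix.conjTranspose_eq_transpose_of_trivial] at this
  exact this.add_posSemidef hQ

lemma lgb_h_mono {n : ℕ} {A Q X Y : Matrix (Fin n) (Fin n) ℝ}
    (h : (Y - X).PosSemidef) : ((A * Y * Aᵀ + Q) - (A * X * Aᵀ + Q)).PosSemidef := by
  have := h.mul_mul_conjTranspose_same A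
  rw [Matrix.conjTranspose_eq_transpose_of_trivial] at this
  have e : (A * Y * Aᵀ + Q) - (A * X * Aᵀ + Q) = A * (Y - X) * Aᵀ := by
    rw [mul_sub, sub_mul]; abel
  rw [e]; exact this

lemma lgb_step {n : ℕ} {A Q I Pinf : Matrix (Fin n) (Fin n) ℝ}
    (hA : IsUnit A.det) (hQ : Q.PosSemidef) (hI : I.PosSemidef)
    (hPinf : Pinf.PosDef) (hfix : riccatiG A Q I Pinf = Pinf)
    {P₀ : Matrix (Fin n) (Fin n) ℝ}
    (hP₀ : P₀.PosDef) (hP₀inf : (P₀ - Pinf).PosSemidef) (s : ℕ → Bool) (k : ℕ) :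
    (lgbMatProc A Q I P₀ s k).PosDef ∧ (lgbMatProc A Q I P₀ s k - Pinf).PosSemidef := by
  induction k with
  | zero => exact ⟨hP₀, hP₀inf⟩
  | succ k ih =>
    obtain ⟨ih1, ih2⟩ := ih
    have p1 := lgb_h_posDef hA hQ ih1
    have p0 := lgb_h_posDef hA hQ hPinf
    have m := lgb_h_mono (A := A) (Q := Q) ih2
    have q1 := p1.inv.add_posSemidef hI
    have q0 := p0.inv.add_posSemidef hI
    rw [lgbMatProc]
    split_ifs with hs
    · refine ⟨q1.inv, ?_⟩
      rw [← hfix]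
      refine lgb_inv_anti q1 q0 ?_
      rw [add_sub_add_right_eq_sub]
      exact lgb_inv_anti p0 p1 m
    · refine ⟨p1, ?_⟩
      have r : ((A * Pinf * Aᵀ + Q) - riccatiG A Q I Pinf).PosSemidef := by
        have := lgb_inv_anti p0.inv q0 (by rw [add_sub_cancel_left]; exact hI)
        rwa [Matrix.nonsing_inv_nonsing_inv _
          ((Matrix.isUnit_iff_isUnit_det _).1 p0.isUnit)] at this
      rw [hfix] at r
      have := m.add r
      rwa [sub_add_sub_cancel] at this

lemma lgb_congr {n : ℕ} (A Q I P₀ : Matrix (Fin n) (Fin n) ℝ) (s t : ℕ → Bool) (k : ℕ)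
    (h : ∀ i < k, s i = t i) : lgbMatProc A Q I P₀ s k = lgbMatProc A Q I P₀ t k := by
  induction k with
  | zero => rfl
  | succ k ih =>
    rw [lgbMatProc, lgbMatProc, ih (fun i hi => h i (by omega)), h k (by omega)]

lemma lgb_integrable {n : ℕ} (A Q I P₀ : Matrix (Fin n) (Fin n) ℝ)
    (μ : Measure (ℕ → Bool)) [IsProbabilityMeasure μ] (k : ℕ) (i j : Fin n) :
    Integrable (fun ω : ℕ → Bool => (lgbMatProc A Q I P₀ ω k)⁻¹ i j) μ := by
  let F : (Fin k → Bool) → ℝ := fun x =>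
    (lgbMatProc A Q I P₀ (fun m => if h : m < k then x ⟨m, h⟩ else false) k)⁻¹ i j
  let r : (ℕ → Bool) → (Fin k → Bool) := fun ω m => ω m
  have hr : Measurable r := by fun_prop
  have e : (fun ω : ℕ → Bool => (lgbMatProc A Q I P₀ ω k)⁻¹ i j) = F ∘ r := by
    funext ω
    simp only [F, r, Function.comp]
    rw [lgb_congr A Q I P₀ ω _ k]
    intro m hm
    simp [hm]
  rw [e]
  have hF : Integrable F (μ.map r) := Integrable.of_finite
  exact hF.comp_measurable hr

/-- For the matrix LGB covariance process started at
`P(0) = P₀ ≥ P∞`, where `P∞` is a positive definite fixed point of `g`: for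
every arrival sequence and every `k`, `P(k) ≥ P∞` and hence `P(k)⁻¹ ≤ P∞⁻¹`;
consequently, for every arrival probability `γ̄ ∈ (0,1]` and every `k`, the
expected information matrix exists (entrywise) and satisfies
`E[P(k)⁻¹] ≤ P∞⁻¹` in the Löwner order. -/
theorem lgb_information_matrix_bounded
    {n : ℕ} (hn : 1 ≤ n) (A Q I Pinf P₀ : Matrix (Fin n) (Fin n) ℝ)
    (hA : IsUnit A.det) (hQ : Q.PosSemidef) (hI : I.PosSemidef)
    (hPinf : Pinf.PosDef) (hfix : riccatiG A Q I Pinf = Pinf)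
    (hP₀ : P₀.PosDef) (hP₀inf : (P₀ - Pinf).PosSemidef) :
    (∀ (s : ℕ → Bool) (k : ℕ),
        (lgbMatProc A Q I P₀ s k - Pinf).PosSemidef ∧
        (Pinf⁻¹ - (lgbMatProc A Q I P₀ s k)⁻¹).PosSemidef)
    ∧ (∀ γ : ℝ, γ ∈ Set.Ioc (0 : ℝ) 1 →
        ∀ μ : Measure (ℕ → Bool), IsProbabilityMeasure μ →
        (∀ k : ℕ, μ {ω : ℕ → Bool | ω k = true} = ENNReal.ofReal γ) →
        iIndepFun
          (fun (k : ℕ) (ω : ℕ → Bool) => ω k) μ →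
        ∀ k : ℕ,
          (∀ i j : Fin n,
            Integrable (fun ω : ℕ → Bool => (lgbMatProc A Q I P₀ ω k)⁻¹ i j) μ) ∧
          (Pinf⁻¹ - Matrix.of (fun i j : Fin n =>
              ∫ ω, (lgbMatProc A Q I P₀ ω k)⁻¹ i j ∂μ)).PosSemidef) := by
  have key := lgb_step hA hQ hI hPinf hfix hP₀ hP₀inf
  have key2 : ∀ (s : ℕ → Bool) (k : ℕ),
      (Pinf⁻¹ - (lgbMatProc A Q I P₀ s k)⁻¹).PosSemidef :=
    fun s k => lgb_inv_anti hPinf (key s k).1 (key s k).2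
  refine ⟨fun s k => ⟨(key s k).2, key2 s k⟩, ?_⟩
  intro γ _ μ hμ _ _ k
  have hint := lgb_integrable A Q I P₀ μ k
  refine ⟨hint, ?_⟩
  refine Matrix.PosSemidef.of_dotProduct_mulVec_nonneg ?_ ?_
  · refine hPinf.inv.isHermitian.sub ?_
    ext i j
    simp only [Matrix.conjTranspose_apply, Matrix.of_apply, star_trivial]
    congr 1
    funext ω
    simpa using (key ω k).1.inv.isHermitian.apply i j
  · intro x
    have e : star x ⬝ᵥ ((Pinf⁻¹ - Matrix.of (fun i j : Fin n =>
              ∫ ω, (lgbMatProc A Q I P₀ ω k)⁻¹ i j ∂μ)) *ᵥ x)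
        = ∫ ω, star x ⬝ᵥ ((Pinf⁻¹ - (lgbMatProc A Q I P₀ ω k)⁻¹) *ᵥ x) ∂μ := by
      simp only [dotProduct, Matrix.mulVec, Matrix.sub_apply, Matrix.of_apply]
      have hi : ∀ i j, Integrable (fun ω => (Pinf⁻¹ i j
          - (lgbMatProc A Q I P₀ ω k)⁻¹ i j) * x j) μ := fun i j =>
        ((integrable_const _).sub (hint i j)).mul_const _
      rw [integral_finset_sum _ (fun i _ =>
        (integrable_finset_sum _ (fun j _ => hi i j)).const_mul _)]
      refine Finset.sum_congr rfl fun i _ => ?_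
      rw [integral_const_mul, integral_finset_sum _ (fun j _ => hi i j)]
      congr 1
      refine Finset.sum_congr rfl fun j _ => ?_
      rw [integral_mul_const, integral_sub (integrable_const _) (hint i j)]
      simp
    rw [e]
    exact integral_nonneg fun ω => (key2 ω k).dotProduct_mulVec_nonneg x
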